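/- arXiv:1607.03826 — 5 statements merged into one kernel-verified Lean document; each statement's English description precedes it below -/
import Mathlib

section
/- Let X be a separable metrizable space and (cX, φ) a compactification of X. Then X has a metrizable compactification (dX, ψ) with dX ⪯ cX, i.e. there is a continuous surjection f : cX → dX with f ∘ φ = ψ. -/
/-! The larger compactification is normal, and `X` has a countable base `B`. For each of the
countably many pairs `(U, V)` of members of `B` whose images `φ(U)` and `φ(X \ V)` have disjoint
closures in `cX`, Urysohn's lemma gives a continuous real function on `cX` that is `0` on the first
closure and `1` on the second. The diagonal of these functions is a continuous map `g` of `cX` into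
a countable power of `ℝ`, so its image `dX` is compact and metrizable. Regularity of `cX` provides
enough pairs for `g ∘ φ` to be an embedding (`exists_separating_pair`), and `g` is the required
surjection onto `dX`. -/


open Topology

noncomputable section

universe u

/-- A compactification of a space `X`: a compact Hausdorff space together with a dense
homeomorphic embedding of `X` into it. -/
structure Compactification (X : Type u) [TopologicalSpace X] where
  carrier : Type u
  [topo : TopologicalSpace carrier]
  [cpt : CompactSpace carrier]
  [t2 : T2Space carrier]
  emb : X → carrier
  isEmb : IsEmbedding emb
  dense : DenseRange emb

attribute [instance] Compactification.topo Compactification.cpt Compactification.t2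

/-- A base `B` of `X` has, around each point of an open set `W`, a pair `U`, `V` of members with
`V ⊆ W` such that `U` and the complement of `V` have images with disjoint closures in the
compactification. -/
theorem exists_separating_pair {X : Type u} [TopologicalSpace X] (c : Compactification X)
    {B : Set (Set X)} (hB : TopologicalSpace.IsTopologicalBasis B) {x : X} {W : Set X}
    (hW : IsOpen W) (hx : x ∈ W) :
    ∃ U ∈ B, ∃ V ∈ B, x ∈ U ∧ V ⊆ W ∧
      Disjoint (closure (c.emb '' U)) (closure (c.emb '' Vᶜ)) := by
  obtain ⟨V, hVB, hxV, hVW⟩ := hB.exists_subset_of_mem_open hx hW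
  obtain ⟨W', hW', rfl⟩ := c.isEmb.isInducing.isOpen_iff.1 (hB.isOpen hVB)
  obtain ⟨N, hN, hNc, hNW⟩ := exists_mem_nhds_isClosed_subset (hW'.mem_nhds hxV)
  obtain ⟨U, hUB, hxU, hUN⟩ :=
    hB.mem_nhds_iff.1 (c.isEmb.continuous.continuousAt.preimage_mem_nhds hN)
  refine ⟨U, hUB, _, hVB, hxU, hVW, ?_⟩
  have h1 : closure (c.emb '' U) ⊆ W' :=
    (closure_minimal (Set.image_subset_iff.2 hUN) hNc).trans hNW
  have h2 : closure (c.emb '' (c.emb ⁻¹' W')ᶜ) ⊆ W'ᶜ :=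
    closure_minimal (Set.image_subset_iff.2 fun _ h => h) hW'.isClosed_compl
  exact Set.disjoint_of_subset h1 h2 disjoint_compl_right

/-- Every compactification of a separable metrizable space `X` admits a smaller metrizable
compactification: there is a metrizable compactification `d` of `X` and a continuous
surjection `f` from the given compactification onto `d` commuting with the embeddings. -/
theorem statement7 {X : Type u} [TopologicalSpace X] [TopologicalSpace.SeparableSpace X]
    [TopologicalSpace.MetrizableSpace X] (c : Compactification X) :
    ∃ (d : Compactification X) (f : c.carrier → d.carrier),
      TopologicalSpace.MetrizableSpace d.carrier ∧
      Continuous f ∧ Function.Surjective f ∧ f ∘ c.emb = d.emb := by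
  have : SecondCountableTopology X := by
    letI := TopologicalSpace.metrizableSpaceMetric X
    exact UniformSpace.secondCountable_of_separable X
  let B := TopologicalSpace.countableBasis X
  have hB : TopologicalSpace.IsTopologicalBasis B := TopologicalSpace.isBasis_countableBasis X
  have : Countable B := (TopologicalSpace.countable_countableBasis X).to_subtype
  -- Indexing by pairs of subsets of `X` keeps the power of `ℝ` in the universe of `X`.
  let ι := {p : B × B // Disjoint (closure (c.emb '' (p.1 : Set X)))
    (closure (c.emb '' (p.2 : Set X)ᶜ))}
  have hex : ∀ p : ι, ∃ f : C(c.carrier, ℝ),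
      Set.EqOn f 0 (closure (c.emb '' (p.1.1 : Set X))) ∧
      Set.EqOn f 1 (closure (c.emb '' (p.1.2 : Set X)ᶜ)) := fun p => by
    obtain ⟨f, h0, h1, -⟩ := exists_continuous_zero_one_of_isClosed isClosed_closure
      isClosed_closure p.2
    exact ⟨f, h0, h1⟩
  choose F hF0 hF1 using hex
  let g : c.carrier → ι → ℝ := fun z p => F p z
  have hg : Continuous g := continuous_pi fun p => (F p).continuous
  have hind : IsInducing (g ∘ c.emb) := by
    refine isInducing_iff_nhds.2 fun x => le_antisymm
      (hg.comp c.isEmb.continuous).continuousAt.le_comap fun S hS => ?_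
    obtain ⟨W, hWS, hW, hxW⟩ := mem_nhds_iff.1 hS
    obtain ⟨U, hU, V, hV, hxU, hVW, hd⟩ := exists_separating_pair c hB hW hxW
    let p : ι := ⟨(⟨U, hU⟩, ⟨V, hV⟩), hd⟩
    have hx0 : g (c.emb x) p = 0 := hF0 p (subset_closure ⟨x, hxU, rfl⟩)
    refine ⟨{v | v p < 1}, (isOpen_lt (continuous_apply p) continuous_const).mem_nhds ?_, ?_⟩
    · change g (c.emb x) p < 1
      rw [hx0]
      exact one_pos
    · intro y hy
      by_contra hyS
      have hy1 : g (c.emb y) p = 1 :=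
        hF1 p (subset_closure ⟨y, fun h => hyS (hWS (hVW h)), rfl⟩)
      exact absurd hy1 (ne_of_lt hy)
  have hr : Continuous (Set.rangeFactorization g) := hg.subtype_mk _
  have : CompactSpace (Set.range g) := isCompact_iff_compactSpace.1 (isCompact_range hg)
  refine ⟨{ carrier := Set.range g
            emb := Set.rangeFactorization g ∘ c.emb
            isEmb := ?_
            dense := Set.rangeFactorization_surjective.denseRange.comp c.dense hr },
    Set.rangeFactorization g, ?_, hr, Set.rangeFactorization_surjective, rfl⟩
  · exact (IsInducing.of_comp (hr.comp c.isEmb.continuous) continuous_subtype_val hind).isEmbedding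
  · change TopologicalSpace.MetrizableSpace (Set.range g)
    infer_instance

end
end

section
/- Let Y be a Tychonoff space, X ⊂ Y a closed subspace, (cX, φ) a compactification of X and (dY, ψ) a compactification of Y such that cX ⪯ cl_{dY}(ψ(X)) (the closure of ψ(X) in dY, regarded as a compactification of X via ψ restricted to X). Then there exists a compactification (δY, χ) of Y such that the closure of χ(X) in δY, regarded as a compactification of X, is equivalent to cX. -/
/-!
The compactification `δ` is the adjunction space `dY ∪_f cX`: the quotient of `dY` by the relation
`GlueRel` that identifies two points of `K = closure (ψ X)` when `f : K → cX` sends them to the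
same point.

The quotient is Hausdorff because `dY` is normal: inequivalent points are separated by continuous
real functions constant on the classes, obtained from Tietze's theorem (for two points of `K`, by
extending the pullback of a function on `cX`) and from Urysohn's lemma (when one point lies
off `K`). Consequently the quotient map `q` is closed.

The points of `ψ Y` are alone in their classes: `K ∩ ψ Y = ψ X` since `X` is closed in `Y`, and a
map between compactifications of `X` has no point of the remainder over a point of `X`
(`eq_closureEmb_of_map_eq`). A closed map which is injective over a saturated set restricts to an
embedding there, so `q ∘ ψ` is an embedding of `Y`. Finally `q` is closed, so the closure of
`q (ψ X)` is `q K`, on which `f` induces a continuous bijection onto `cX`.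
-/

open Topology

noncomputable section

universe u

/-- The canonical embedding of a subspace `s ⊆ Y` into the closure of its image inside a
compactification of `Y`. -/
def closureEmb {Y : Type u} [TopologicalSpace Y] (d : Compactification Y) (s : Set Y)
    (x : ↥s) : ↥(closure (d.emb '' s)) :=
  ⟨d.emb x, subset_closure ⟨x, x.2, rfl⟩⟩

/-- The equivalence relation on `D` generated by identifying points of `K` with equal image
under `f`. -/
def GlueRel {D C : Type u} (K : Set D) (f : K → C) : Setoid D where
  r x y := x = y ∨ ∃ (hx : x ∈ K) (hy : y ∈ K), f ⟨x, hx⟩ = f ⟨y, hy⟩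
  iseqv := by
    refine ⟨fun x => Or.inl rfl, ?_, ?_⟩
    · rintro x y (rfl | ⟨hx, hy, h⟩)
      · exact Or.inl rfl
      · exact Or.inr ⟨hy, hx, h.symm⟩
    · rintro x y z (rfl | ⟨hx, hy, h⟩) (rfl | ⟨hy', hz, h'⟩)
      · exact Or.inl rfl
      · exact Or.inr ⟨hy', hz, h'⟩
      · exact Or.inr ⟨hx, hy, h⟩
      · exact Or.inr ⟨hx, hz, h.trans h'⟩

section Glue

variable {D C : Type u} [TopologicalSpace D] [TopologicalSpace C]

/-- A point off `K` is separated from any other point by a function vanishing on `K`. -/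
lemma exists_separating_of_notMem [CompactSpace D] [T2Space D] {K : Set D} (hK : IsClosed K)
    (f : K → C) {x y : D} (hx : x ∉ K) (hxy : x ≠ y) :
    ∃ h : C(D, ℝ), (∀ a b, (GlueRel K f).r a b → h a = h b) ∧ h x ≠ h y := by
  obtain ⟨h, h0, h1, -⟩ := exists_continuous_zero_one_of_isClosed
    (s := K ∪ {y}) (t := {x}) (hK.union isClosed_singleton) isClosed_singleton
    (by
      rw [Set.disjoint_singleton_right]
      rintro (h | h)
      · exact hx h
      · exact hxy h)
  refine ⟨h, ?_, ?_⟩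
  · rintro a b (rfl | ⟨ha, hb, -⟩)
    · rfl
    · exact (h0 (Or.inl ha)).trans (h0 (Or.inl hb)).symm
  · rw [h0 (Or.inr rfl), h1 rfl]
    simp

lemma exists_separating [CompactSpace D] [T2Space D] [CompactSpace C] [T2Space C] {K : Set D}
    (hK : IsClosed K) {f : K → C} (hf : Continuous f) {x y : D} (hxy : ¬ (GlueRel K f).r x y) :
    ∃ h : C(D, ℝ), (∀ a b, (GlueRel K f).r a b → h a = h b) ∧ h x ≠ h y := by
  have hne : x ≠ y := fun h => hxy (Or.inl h)
  by_cases hx : x ∈ K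
  · by_cases hy : y ∈ K
    · have hfne : f ⟨x, hx⟩ ≠ f ⟨y, hy⟩ := fun h => hxy (Or.inr ⟨hx, hy, h⟩)
      obtain ⟨k, k0, k1, -⟩ := exists_continuous_zero_one_of_isClosed
        (s := {f ⟨x, hx⟩}) (t := {f ⟨y, hy⟩}) isClosed_singleton isClosed_singleton (by simpa)
      obtain ⟨h, hh⟩ := ContinuousMap.exists_extension hK.isClosedEmbedding_subtypeVal
        (k.comp ⟨f, hf⟩)
      have hval : ∀ z : K, h z = k (f z) := fun z => DFunLike.congr_fun hh z
      refine ⟨h, ?_, ?_⟩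
      · rintro a b (rfl | ⟨ha, hb, hab⟩)
        · rfl
        · rw [hval ⟨a, ha⟩, hval ⟨b, hb⟩, hab]
      · rw [hval ⟨x, hx⟩, hval ⟨y, hy⟩, k0 rfl, k1 rfl]
        simp
    · obtain ⟨h, hr, hne'⟩ := exists_separating_of_notMem hK f hy hne.symm
      exact ⟨h, hr, hne'.symm⟩
  · exact exists_separating_of_notMem hK f hx hne

lemma t2Space_quotient_glueRel [CompactSpace D] [T2Space D] [CompactSpace C] [T2Space C]
    {K : Set D} (hK : IsClosed K) {f : K → C} (hf : Continuous f) :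
    T2Space (Quotient (GlueRel K f)) := by
  refine ⟨fun a b => ?_⟩
  induction a, b using Quotient.inductionOn₂ with
  | _ x y =>
    intro hab
    obtain ⟨h, hr, hne⟩ := exists_separating hK hf (fun h => hab (Quotient.sound h))
    exact separated_by_continuous (f := Quotient.lift h hr) (h.continuous.quotient_lift hr) hne

end Glue

/-- No point of the remainder of the closure of `X` lies over a point of `X`: if points of `X`
tend to `z`, their images in `c` tend to `c.emb x`, so they tend to `x` in `X` and `z` is `x`. -/
lemma eq_closureEmb_of_map_eq {Y : Type u} [TopologicalSpace Y] {s : Set Y}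
    {c : Compactification ↥s} {d : Compactification Y}
    {f : ↥(closure (d.emb '' s)) → c.carrier} (hf : Continuous f)
    (hfe : ∀ x : ↥s, f (closureEmb d s x) = c.emb x) {z : ↥(closure (d.emb '' s))} {x : ↥s}
    (hz : f z = c.emb x) : z = closureEmb d s x := by
  have hcont : Continuous (closureEmb d s) :=
    (d.isEmb.continuous.comp continuous_subtype_val).subtype_mk _
  have hne : (Filter.comap (closureEmb d s) (𝓝 z)).NeBot := by
    rw [Filter.comap_neBot_iff]
    intro t ht
    obtain ⟨u, hu, hut⟩ := mem_nhds_subtype _ _ _ |>.1 ht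
    obtain ⟨_, hwu, y, hy, rfl⟩ := mem_closure_iff_nhds.1 z.2 u hu
    exact ⟨⟨y, hy⟩, hut hwu⟩
  have h1 : Filter.Tendsto (closureEmb d s) (Filter.comap (closureEmb d s) (𝓝 z)) (𝓝 z) :=
    Filter.tendsto_comap
  have h2 : Filter.Tendsto c.emb (Filter.comap (closureEmb d s) (𝓝 z)) (𝓝 (c.emb x)) := by
    rw [← hz]
    exact ((hf.tendsto z).comp h1).congr hfe
  have h3 : Filter.Tendsto id (Filter.comap (closureEmb d s) (𝓝 z)) (𝓝 x) :=
    c.isEmb.tendsto_nhds_iff.2 h2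
  exact tendsto_nhds_unique h1 ((hcont.tendsto x).comp h3)

/-- Let `Y` be a Tychonoff space, `X ⊆ Y` a closed subspace, `c` a compactification of `X`
and `d` a compactification of `Y` such that `c` is smaller than the closure of the image of
`X` in `d` (regarded as a compactification of `X`). Then there is a compactification `δ` of
`Y` such that the closure of the image of `X` in `δ`, regarded as a compactification of
`X`, is equivalent to `c` (witnessed by a continuous bijection, necessarily a
homeomorphism, commuting with the embeddings). -/
theorem statement9 {Y : Type u} [TopologicalSpace Y] [T35Space Y]
    (s : Set Y) (hs : IsClosed s)
    (c : Compactification ↥s) (d : Compactification Y)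
    (hle : ∃ f : ↥(closure (d.emb '' s)) → c.carrier,
      Continuous f ∧ ∀ x : ↥s, f (closureEmb d s x) = c.emb x) :
    ∃ (δ : Compactification Y) (g : ↥(closure (δ.emb '' s)) → c.carrier),
      Continuous g ∧ Function.Bijective g ∧ ∀ x : ↥s, g (closureEmb δ s x) = c.emb x := by
  obtain ⟨f, hf, hfe⟩ := hle
  have hT2 : T2Space (Quotient (GlueRel _ f)) := t2Space_quotient_glueRel isClosed_closure hf
  let q : d.carrier → Quotient (GlueRel _ f) := Quotient.mk _
  have hq : Continuous q := continuous_quotient_mk'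
  have hqs : Function.Surjective q := Quotient.mk_surjective
  have hqc : IsClosedMap q := hq.isClosedMap
  have hmem : ∀ y, d.emb y ∈ closure (d.emb '' s) → y ∈ s := fun y hy => by
    have : y ∈ closure s := by rwa [d.isEmb.isInducing.closure_eq_preimage_closure_image]
    rwa [hs.closure_eq] at this
  have hfib : ∀ (z : d.carrier) (y : Y), q z = q (d.emb y) → z = d.emb y := by
    intro z y h
    rcases Quotient.exact h with h | ⟨hz, hy, h⟩
    · exact h
    · exact congrArg Subtype.val (eq_closureEmb_of_map_eq hf hfe
        (z := ⟨z, hz⟩) (x := ⟨y, hmem y hy⟩) (h.trans (hfe ⟨y, hmem y hy⟩)))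
  have hind : IsInducing (q ∘ d.emb) := by
    rw [isInducing_iff_nhds]
    intro y
    refine le_antisymm (((hq.comp d.isEmb.continuous).tendsto y).le_comap) ?_
    -- `q` is closed with fibre `{d.emb y}` over `q (d.emb y)`, so neighbourhoods of `d.emb y`
    -- contain preimages of neighbourhoods of `q (d.emb y)`.
    have hnhds : Filter.comap q (𝓝 (q (d.emb y))) ≤ 𝓝 (d.emb y) := by
      rw [hqc.comap_nhds_eq hq]
      have : q ⁻¹' {q (d.emb y)} = {d.emb y} := by
        ext z
        exact ⟨hfib z y, fun h => congrArg q h⟩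
      rw [this, nhdsSet_singleton]
    rw [d.isEmb.isInducing.nhds_eq_comap, ← Filter.comap_comap]
    exact Filter.comap_mono hnhds
  let δ : Compactification Y :=
    { carrier := Quotient (GlueRel _ f)
      emb := q ∘ d.emb
      isEmb := ⟨hind, fun a b h => d.isEmb.injective (hfib _ _ h)⟩
      dense := hqs.denseRange.comp d.dense hq }
  have hcl : closure (δ.emb '' s) = q '' closure (d.emb '' s) := by
    rw [← hqc.closure_image_eq_of_continuous hq, Set.image_image]
    rfl
  let p : ↥(closure (d.emb '' s)) → ↥(closure (δ.emb '' s)) :=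
    fun z => ⟨q z, hcl ▸ Set.mem_image_of_mem q z.2⟩
  have hp : Continuous p := (hq.comp continuous_subtype_val).subtype_mk _
  have hps : Function.Surjective p := by
    rintro ⟨w, hw⟩
    obtain ⟨z, hz, hzw⟩ := hcl ▸ hw
    exact ⟨⟨z, hz⟩, Subtype.ext hzw⟩
  have hpf : ∀ z z', p z = p z' ↔ f z = f z' := by
    intro z z'
    constructor
    · intro h
      rcases Quotient.exact (congrArg Subtype.val h) with h | ⟨_, _, h⟩
      · rw [Subtype.ext h]
      · exact h
    · exact fun h => Subtype.ext (Quotient.sound (Or.inr ⟨z.2, z'.2, h⟩))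
  have hcompact : CompactSpace ↥(closure (d.emb '' s)) :=
    isCompact_iff_compactSpace.1 isClosed_closure.isCompact
  have hpq : IsQuotientMap p := hp.isClosedMap.isQuotientMap hp hps
  have hfs : Function.Surjective f := by
    have hrange : IsClosed (Set.range f) := (isCompact_range hf).isClosed
    intro w
    refine hrange.closure_subset_iff.2 ?_ (c.dense w)
    rintro _ ⟨x, rfl⟩
    exact ⟨_, hfe x⟩
  let g : ↥(closure (δ.emb '' s)) → c.carrier := fun w => f (Function.surjInv hps w)
  have hg : ∀ z, g (p z) = f z := fun z => (hpf _ _).1 (Function.surjInv_eq hps (p z))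
  refine ⟨δ, g, ?_, ⟨?_, ?_⟩, ?_⟩
  · rw [hpq.continuous_iff]
    exact hf.congr fun z => (hg z).symm
  · intro a b hab
    obtain ⟨z, rfl⟩ := hps a
    obtain ⟨z', rfl⟩ := hps b
    rw [hg, hg] at hab
    exact (hpf _ _).2 hab
  · intro w
    obtain ⟨z, rfl⟩ := hfs w
    exact ⟨p z, hg z⟩
  · intro x
    exact (hg (closureEmb d s x)).trans (hfe x)

end
end

section
/- Let Y be a Tychonoff space and X ⊂ Y a closed subspace which is C*-embedded in Y, i.e. every bounded continuous real-valued function on X extends to a continuous real-valued function on Y. Then every compactification (cX, φ) of X is of the form cX = cl_{dY}(ψ(X)) for some compactification (dY, ψ) of Y; that is, the closure of ψ(X) in dY, regarded as a compactification of X via ψ|_X, is equivalent to cX. -/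
/-!
The compactification of `Y` is built from those continuous functions `f : Y → [0,1]` whose
restriction to `s` extends over `c`. An index is a pair `(f, h)` with `h : c → [0,1]` continuous
and `f = h ∘ c.emb` on `s`; evaluating all the `f` maps `Y` to a cube, evaluating all the `h` maps
`c` to the same cube, and the two maps agree on `s`.

* The evaluation of `Y` is an embedding because the `f` separate points from closed sets
  (`exists_pair_separating`). Away from `s` this is complete regularity. At a point `y ∈ s`, one
  extends to `Y` a function `h` on `c` that vanishes at `y` and is `1` off a small neighbourhood,
  and takes the maximum with `2g - 1`, where `g` separates `y` from the closed set; the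
  neighbourhood is chosen so that this does not change the values on `s`.
* The evaluation of `c` is injective because every `h` occurs in a pair (`exists_pair`), by
  `C*`-embeddedness.

Hence `c` is embedded in the closure of the image of `Y`, and its image, being compact and having
the image of `s` as a dense subset, is the closure of the image of `s`
(`exists_closure_map_of_injective`).
-/

open Topology

noncomputable section

universe u

open Set unitInterval

/-- If `c` maps continuously and injectively to a compactification `δ` of `Y`, compatibly with the
embeddings of `s`, then its image is the closure of `s` in `δ` and the inverse map identifies that
closure with `c`. -/
lemma exists_closure_map_of_injective {Y : Type u} [TopologicalSpace Y] {s : Set Y}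
    (c : Compactification ↥s) (δ : Compactification Y) (r : c.carrier → δ.carrier)
    (hr : Continuous r) (hinj : Function.Injective r) (hrs : ∀ x : ↥s, r (c.emb x) = δ.emb x) :
    ∃ g : ↥(closure (δ.emb '' s)) → c.carrier,
      Continuous g ∧ Function.Bijective g ∧ ∀ x : ↥s, g (closureEmb δ s x) = c.emb x := by
  have himage : r '' range c.emb = δ.emb '' s := by
    ext z
    simp only [mem_image, mem_range, exists_exists_eq_and]
    constructor
    · rintro ⟨x, rfl⟩
      exact ⟨x, x.2, (hrs x).symm⟩
    · rintro ⟨x, hx, rfl⟩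
      exact ⟨⟨x, hx⟩, hrs ⟨x, hx⟩⟩
  have hrange : range r = closure (δ.emb '' s) := by
    rw [← himage, hr.isClosedMap.closure_image_eq_of_continuous hr, c.dense.closure_range,
      image_univ]
  let r' : c.carrier → ↥(closure (δ.emb '' s)) := fun z => ⟨r z, hrange ▸ mem_range_self z⟩
  have hbij : Function.Bijective r' := by
    refine ⟨fun a b hab => hinj (congrArg Subtype.val hab), fun ⟨w, hw⟩ => ?_⟩
    obtain ⟨z, rfl⟩ := hrange ▸ hw
    exact ⟨z, rfl⟩
  have hcont : Continuous (Equiv.ofBijective r' hbij) := hr.subtype_mk _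
  let e := hcont.homeoOfEquivCompactToT2
  refine ⟨e.symm, e.symm.continuous, e.symm.bijective, fun x => ?_⟩
  rw [e.symm_apply_eq]
  exact Subtype.ext (hrs x).symm

section Construction

variable {Y : Type u} [TopologicalSpace Y] {s : Set Y}

/-- The coordinates of the cube: pairs of `[0,1]`-valued continuous functions, on `Y` and on `c`,
that agree on `s`. -/
abbrev CompatiblePair (c : Compactification ↥s) : Type u :=
  {p : C(Y, I) × C(c.carrier, I) // ∀ x : ↥s, p.1 x = p.2 (c.emb x)}

/-- A `C*`-embedded subspace allows every function `h ∘ c.emb` to be extended to `Y`. -/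
lemma exists_real_extension
    (hC : ∀ g : BoundedContinuousFunction ↥s ℝ, ∃ G : C(Y, ℝ), ∀ x : ↥s, G x = g x)
    (c : Compactification ↥s) (h : C(c.carrier, I)) :
    ∃ H : C(Y, ℝ), ∀ x : ↥s, H x = h (c.emb x) := by
  obtain ⟨G, hG⟩ := hC (BoundedContinuousFunction.compContinuous
    (BoundedContinuousFunction.mkOfCompact
      ⟨fun z => (h z : ℝ), continuous_subtype_val.comp h.continuous⟩)
    ⟨c.emb, c.isEmb.continuous⟩)
  exact ⟨G, hG⟩

lemma exists_pair
    (hC : ∀ g : BoundedContinuousFunction ↥s ℝ, ∃ G : C(Y, ℝ), ∀ x : ↥s, G x = g x)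
    (c : Compactification ↥s) (h : C(c.carrier, I)) :
    ∃ p : CompatiblePair c, p.1.2 = h := by
  obtain ⟨H, hH⟩ := exists_real_extension hC c h
  refine ⟨⟨(⟨fun y => projIcc 0 1 (zero_le_one' ℝ) (H y),
    continuous_projIcc.comp H.continuous⟩, h), fun x => ?_⟩, rfl⟩
  simp [hH x]

/-- The first components of compatible pairs separate points of `Y` from closed sets. -/
lemma exists_pair_separating [T35Space Y] (hs : IsClosed s)
    (hC : ∀ g : BoundedContinuousFunction ↥s ℝ, ∃ G : C(Y, ℝ), ∀ x : ↥s, G x = g x)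
    (c : Compactification ↥s) (y : Y) (A : Set Y) (hA : IsClosed A) (hy : y ∉ A) :
    ∃ p : CompatiblePair c, p.1.1 y = 0 ∧ ∀ a ∈ A, p.1.1 a = 1 := by
  by_cases hys : y ∈ s
  · obtain ⟨g, hg, hgy, hgA⟩ := CompletelyRegularSpace.completely_regular y A hA hy
    have hU : IsOpen {x : ↥s | (g x : ℝ) < 1 / 2} :=
      isOpen_lt (by fun_prop) continuous_const
    obtain ⟨V, hV, hVU⟩ := c.isEmb.isInducing.isOpen_iff.1 hU
    have hyV : c.emb ⟨y, hys⟩ ∈ V := by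
      change (⟨y, hys⟩ : ↥s) ∈ c.emb ⁻¹' V
      rw [hVU]
      simp [hgy]
    obtain ⟨h, hh, hhy, hhV⟩ := CompletelyRegularSpace.completely_regular (c.emb ⟨y, hys⟩) Vᶜ
      hV.isClosed_compl (by simpa using hyV)
    obtain ⟨H, hH⟩ := exists_real_extension hC c ⟨h, hh⟩
    -- On `s`, either `g < 1/2`, so that `2g - 1 < 0 ≤ h`, or `h = 1 ≥ 2g - 1`.
    have hle : ∀ x : ↥s, 2 * (g x : ℝ) - 1 ≤ h (c.emb x) := by
      intro x
      by_cases hx : c.emb x ∈ V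
      · have hx' : x ∈ c.emb ⁻¹' V := hx
        rw [hVU] at hx'
        have h1 : (g x : ℝ) < 1 / 2 := hx'
        have h2 := (h (c.emb x)).2.1
        linarith
      · have h1 : h (c.emb x) = 1 := hhV hx
        have h2 := (g x).2.2
        rw [h1, Icc.coe_one]
        linarith
    have hmax : ∀ x : ↥s, max (H x) (2 * (g x : ℝ) - 1) = h (c.emb x) := by
      intro x
      rw [hH x]
      exact max_eq_left (hle x)
    refine ⟨⟨(⟨fun z => projIcc 0 1 (zero_le_one' ℝ) (max (H z) (2 * (g z : ℝ) - 1)),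
      continuous_projIcc.comp (by fun_prop)⟩, ⟨h, hh⟩), fun x => ?_⟩, ?_, fun a ha => ?_⟩
    · simp [hmax x]
    · have := hmax ⟨y, hys⟩
      rw [hhy] at this
      change projIcc 0 1 (zero_le_one' ℝ) (max (H y) (2 * (g y : ℝ) - 1)) = 0
      rw [this]
      exact projIcc_left (zero_le_one' ℝ)
    · refine projIcc_of_right_le (zero_le_one' ℝ) ?_
      have h1 : g a = 1 := hgA ha
      rw [h1, Icc.coe_one]
      exact le_max_of_le_right (by norm_num)
  · obtain ⟨f, hf, hfy, hfA⟩ := CompletelyRegularSpace.completely_regular y (A ∪ s)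
      (hA.union hs) (by simp [hy, hys])
    exact ⟨⟨(⟨f, hf⟩, ContinuousMap.const _ 1), fun x => hfA (Or.inr x.2)⟩, hfy,
      fun a ha => hfA (Or.inl ha)⟩

/-- Evaluation of the first components, from `Y` to the cube. -/
def evalSpace (c : Compactification ↥s) (y : Y) : CompatiblePair c → I := fun p => p.1.1 y

/-- Evaluation of the second components, from `c` to the cube. -/
def evalCompactification (c : Compactification ↥s) (z : c.carrier) : CompatiblePair c → I :=
  fun p => p.1.2 z

lemma continuous_evalCompactification (c : Compactification ↥s) :
    Continuous (evalCompactification c) :=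
  continuous_pi fun p => p.1.2.continuous

lemma evalCompactification_emb (c : Compactification ↥s) (x : ↥s) :
    evalCompactification c (c.emb x) = evalSpace c x :=
  funext fun p => (p.2 x).symm

lemma isEmbedding_evalSpace [T35Space Y] (hs : IsClosed s)
    (hC : ∀ g : BoundedContinuousFunction ↥s ℝ, ∃ G : C(Y, ℝ), ∀ x : ↥s, G x = g x)
    (c : Compactification ↥s) : IsEmbedding (evalSpace c) := by
  have hcont : Continuous (evalSpace c) := continuous_pi fun p => p.1.1.continuous
  refine IsInducing.isEmbedding (isInducing_iff_nhds.2 fun y => le_antisymm ?_ ?_)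
  · exact hcont.continuousAt.tendsto.le_comap
  · intro U hU
    obtain ⟨W, hWU, hW, hyW⟩ := mem_nhds_iff.1 hU
    obtain ⟨p, hpy, hpW⟩ :=
      exists_pair_separating hs hC c y Wᶜ hW.isClosed_compl (by simpa using hyW)
    refine Filter.mem_comap.2 ⟨{q | q p ≠ 1},
      (isOpen_ne_fun (continuous_apply p) continuous_const).mem_nhds ?_, fun z hz => hWU ?_⟩
    · change p.1.1 y ≠ 1
      rw [hpy]
      exact zero_ne_one
    · by_contra hzW
      exact hz (hpW z hzW)

lemma injective_evalCompactification
    (hC : ∀ g : BoundedContinuousFunction ↥s ℝ, ∃ G : C(Y, ℝ), ∀ x : ↥s, G x = g x)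
    (c : Compactification ↥s) : Function.Injective (evalCompactification c) := by
  intro z w hzw
  by_contra hne
  obtain ⟨h, hh, hz, hw⟩ := CompletelyRegularSpace.completely_regular z {w} isClosed_singleton
    (by simpa using hne)
  obtain ⟨p, hp⟩ := exists_pair hC c ⟨h, hh⟩
  have heq : p.1.2 z = p.1.2 w := congrFun hzw p
  rw [hp] at heq
  have hw' : h w = 1 := hw rfl
  exact zero_ne_one (hz.symm.trans (Eq.trans heq hw'))

end Construction

/-- Let `Y` be a Tychonoff space and `X ⊆ Y` a closed subspace which is `C*`-embedded in
`Y` (every bounded continuous real-valued function on `X` extends continuously to `Y`).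
Then every compactification `c` of `X` arises as the closure of the image of `X` in some
compactification `δ` of `Y`: this closure, regarded as a compactification of `X`, is
equivalent to `c` (witnessed by a continuous bijection, necessarily a homeomorphism,
commuting with the embeddings). -/
theorem statement10 {Y : Type u} [TopologicalSpace Y] [T35Space Y]
    (s : Set Y) (hs : IsClosed s)
    (hC : ∀ g : BoundedContinuousFunction ↥s ℝ, ∃ G : C(Y, ℝ), ∀ x : ↥s, G x = g x)
    (c : Compactification ↥s) :
    ∃ (δ : Compactification Y) (g : ↥(closure (δ.emb '' s)) → c.carrier),
      Continuous g ∧ Function.Bijective g ∧ ∀ x : ↥s, g (closureEmb δ s x) = c.emb x := by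
  have hemb := isEmbedding_evalSpace hs hC c
  let K : Set (CompatiblePair c → I) := closure (range (evalSpace c))
  have : CompactSpace K := isCompact_iff_compactSpace.1 isClosed_closure.isCompact
  let δ : Compactification Y :=
    { carrier := K
      emb := fun y => ⟨evalSpace c y, subset_closure (mem_range_self y)⟩
      isEmb := hemb.codRestrict K _
      dense := by
        rintro ⟨z, hz⟩
        rw [closure_subtype, ← range_comp]
        exact hz }
  -- The image of `c` lies in `K`, since that of its dense subset `s` does.
  have hK : ∀ z, evalCompactification c z ∈ K := fun z =>
    c.dense.induction_on z (isClosed_closure.preimage (continuous_evalCompactification c))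
      fun x => by
        rw [evalCompactification_emb]
        exact subset_closure (mem_range_self _)
  obtain ⟨g, hg⟩ := exists_closure_map_of_injective c δ
    (fun z => ⟨evalCompactification c z, hK z⟩)
    ((continuous_evalCompactification c).subtype_mk hK)
    (fun z w hzw => injective_evalCompactification hC c (congrArg Subtype.val hzw))
    (fun x => Subtype.ext (evalCompactification_emb c x))
  exact ⟨δ, g, hg⟩

end
end

section
/- Let D ∈ 𝒟, let (D_n)_{n∈ω} be a sequence of elements of 𝒟, and let {d_n : n ∈ ω} be a one-to-one enumeration of D. Then ⋃_{n∈ω} d_n⌢D_n ∈ 𝒟, where d_n⌢D_n = {d_n⌢t : t ∈ D_n} denotes the set of concatenations of d_n with elements of D_n. -/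
/-!
For a set `D` of pairwise incomparable sequences, `D ∈ 𝒟` holds exactly when every `σ ∈ ω^ω` has
an initial segment with only finitely many extensions in `D` (`memD_iff`). With this criterion the
union is handled by two cases. If `σ` extends some `d n`, incomparability leaves only `d n ⌢ D_n`
near `σ`, and the criterion for `D_n` applies to the tail of `σ`. Otherwise any element
`d k ⌢ t` extending a long initial segment of `σ` has `d k` itself extending that segment; only
finitely many `d k` extend some `σ|m`, so none extends a sufficiently long initial segment.
-/

open Topology

noncomputable section

universe u

/-- Finite sequences of non-negative integers (`𝒮`). -/
abbrev FinSeq := List ℕ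

/-- The Baire space `ω^ω` of infinite sequences of non-negative integers,
with the product topology. -/
abbrev Baire := ℕ → ℕ

/-- The initial segment `σ|m` of `σ ∈ ω^ω` of length `m`. -/
def seqTake (σ : Baire) (m : ℕ) : FinSeq := (List.range m).map σ

/-- `σ ∈ ω^ω` extends the finite sequence `s`. -/
def ExtendsF (σ : Baire) (s : FinSeq) : Prop := seqTake σ s.length = s

/-- Two finite sequences are comparable if one is an initial segment of the other. -/
def Comparable (s t : FinSeq) : Prop := s <+: t ∨ t <+: s

/-- The smallest tree (set of finite sequences closed under initial segments)
containing `S`. -/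
def clTr (S : Set FinSeq) : Set FinSeq := {u | ∃ s ∈ S, u <+: s}

/-- The basic clopen set `N(s)` of all infinite sequences extending `s`. -/
def Nbhd (s : FinSeq) : Set Baire := {σ | ExtendsF σ s}

/-- `A ⊂ ω^ω` is an infinite extension of `B ⊂ 𝒮`: there is a bijection of `B` onto `A`
sending each `s` to an infinite sequence extending it. -/
def InfExtension (B : Set FinSeq) (A : Set Baire) : Prop :=
  ∃ φ : FinSeq → Baire, Set.BijOn φ B A ∧ ∀ s ∈ B, ExtendsF (φ s) s

/-- A subset of the Baire space is closed and discrete (as a subspace). -/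
def ClosedDiscrete (A : Set Baire) : Prop := IsClosed A ∧ DiscreteTopology A

/-- The family `𝒟` of sets of pairwise incomparable finite sequences all of whose
infinite extensions are closed and discrete in `ω^ω`. -/
def memD (D : Set FinSeq) : Prop :=
  (∀ s ∈ D, ∀ t ∈ D, s ≠ t → ¬ Comparable s t) ∧
  ∀ A : Set Baire, InfExtension D A → ClosedDiscrete A

/-- Finitely many elements of `D` extend some initial segment of `σ`: the pointwise form of the
closed-and-discrete condition in `memD`. -/
def LocFin (D : Set FinSeq) (σ : Baire) : Prop :=
  ∃ m, {s ∈ D | seqTake σ m <+: s}.Finite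

lemma seqTake_length (σ : Baire) (m : ℕ) : (seqTake σ m).length = m := by simp [seqTake]

lemma seqTake_add (σ : Baire) (a b : ℕ) :
    seqTake σ (a + b) = seqTake σ a ++ seqTake (fun i => σ (a + i)) b := by
  simp [seqTake, List.range_add, Function.comp_def]

lemma seqTake_prefix (σ : Baire) {m n : ℕ} (h : m ≤ n) : seqTake σ m <+: seqTake σ n := by
  obtain ⟨k, rfl⟩ := Nat.exists_eq_add_of_le h
  rw [seqTake_add]
  exact List.prefix_append _ _

lemma extendsF_of_prefix {σ : Baire} {s : FinSeq} {m : ℕ} (h : s <+: seqTake σ m) :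
    ExtendsF σ s := by
  have hl : s.length ≤ m := by simpa [seqTake_length] using h.length_le
  have h2 := List.prefix_of_prefix_length_le (seqTake_prefix σ hl) h (by simp [seqTake_length])
  exact h2.eq_of_length (by simp [seqTake_length])

lemma seqTake_eq_iff {σ τ : Baire} {m : ℕ} :
    seqTake τ m = seqTake σ m ↔ τ ∈ PiNat.cylinder (E := fun _ => ℕ) σ m := by
  simp [seqTake, PiNat.cylinder]

lemma comparable_of_extendsF {σ : Baire} {s t : FinSeq} (hs : ExtendsF σ s) (ht : ExtendsF σ t) :
    Comparable s t := by
  unfold ExtendsF at hs ht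
  rw [Comparable, ← hs, ← ht]
  exact (le_total s.length t.length).imp (seqTake_prefix σ) (seqTake_prefix σ)

lemma extendsF_getD (s : FinSeq) : ExtendsF (fun i => s.getD i 0) s := by
  refine List.ext_getElem (by simp [seqTake]) fun i h1 h2 => ?_
  simp [seqTake, h2]

lemma exists_seqTake_subset {σ : Baire} {U : Set Baire} (hU : U ∈ 𝓝 σ) :
    ∃ m, ∀ τ, seqTake τ m = seqTake σ m → τ ∈ U := by
  obtain ⟨_, ⟨x, m, rfl⟩, hx, hsub⟩ :=
    (PiNat.isTopologicalBasis_cylinders (fun _ => ℕ)).mem_nhds_iff.1 hU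
  refine ⟨m, fun τ h => hsub ?_⟩
  rw [← PiNat.mem_cylinder_iff_eq.1 hx]
  exact seqTake_eq_iff.1 h

lemma closedDiscrete_iff {A : Set Baire} :
    ClosedDiscrete A ↔ ∀ x, Disjoint (𝓝[≠] x) (Filter.principal A) := by
  rw [← isClosed_and_discrete_iff, isDiscrete_iff_discreteTopology, ClosedDiscrete]

/-- The topology is eliminated from `memD`. Extending each `s ∈ D` by zeros suffices for the
forward direction; conversely, a sequence extending `s ∈ D` and lying near `σ` forces `s` to extend
an initial segment of `σ` or to be one of its finitely many initial segments. -/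
lemma memD_iff {D : Set FinSeq} :
    memD D ↔ (∀ s ∈ D, ∀ t ∈ D, s ≠ t → ¬ Comparable s t) ∧ ∀ σ, LocFin D σ := by
  refine and_congr_right fun hinc => ⟨fun h σ => ?_, ?_⟩
  · set φ : FinSeq → Baire := fun s i => s.getD i 0
    have hφ : Set.InjOn φ D := by
      intro s hs t ht hst
      by_contra hne
      refine hinc s hs t ht hne (comparable_of_extendsF (extendsF_getD s) ?_)
      exact (congrArg (ExtendsF · t) hst).mpr (extendsF_getD t)
    have hd := closedDiscrete_iff.1 (h (φ '' D) ⟨φ, hφ.bijOn_image, fun s _ => extendsF_getD s⟩) σ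
    rw [Filter.disjoint_principal_right, mem_nhdsWithin_iff_exists_mem_nhds_inter] at hd
    obtain ⟨U, hU, hsub⟩ := hd
    obtain ⟨m, hm⟩ := exists_seqTake_subset hU
    refine ⟨m, Set.Subsingleton.finite ?_⟩
    have key : ∀ s ∈ D, seqTake σ m <+: s → φ s = σ := by
      intro s hs hp
      by_contra hne
      refine hsub ⟨hm (φ s) ?_, hne⟩ ⟨s, hs, rfl⟩
      have h1 : seqTake σ m <+: seqTake (φ s) s.length := by
        rwa [show seqTake (φ s) s.length = s from extendsF_getD s]
      simpa [ExtendsF, seqTake_length] using extendsF_of_prefix h1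
    rintro s ⟨hs, hps⟩ t ⟨ht, hpt⟩
    exact hφ hs ht ((key s hs hps).trans (key t ht hpt).symm)
  · rintro h A ⟨φ, hbij, hext⟩
    rw [closedDiscrete_iff]
    intro σ
    obtain ⟨m, hm⟩ := h σ
    set C : Set Baire := PiNat.cylinder (E := fun _ => ℕ) σ m
    have hC : C ∈ 𝓝 σ :=
      (PiNat.isOpen_cylinder (fun _ => ℕ) σ m).mem_nhds (PiNat.self_mem_cylinder σ m)
    have hfin : (A ∩ C).Finite := by
      refine ((hm.union (List.finite_toSet (seqTake σ m).inits)).image φ).subset ?_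
      rintro τ ⟨hτ, hτC⟩
      obtain ⟨s, hs, rfl⟩ := hbij.surjOn hτ
      refine ⟨s, ?_, rfl⟩
      have he := seqTake_eq_iff.2 hτC
      have hx : ExtendsF (φ s) (seqTake σ m) := by
        rw [ExtendsF, seqTake_length, he]
      rcases comparable_of_extendsF hx (hext s hs) with h1 | h1
      · exact Or.inl ⟨hs, h1⟩
      · exact Or.inr ((List.mem_inits _ _).2 h1)
    rw [Filter.disjoint_principal_right, mem_nhdsWithin_iff_exists_mem_nhds_inter]
    refine ⟨C ∩ ((A ∩ C) \ {σ})ᶜ, Filter.inter_mem hC ?_, ?_⟩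
    · exact hfin.sdiff.isClosed.isOpen_compl.mem_nhds (by simp)
    · rintro τ ⟨⟨h1, h2⟩, h3⟩ h4
      exact h2 ⟨⟨h4, h1⟩, h3⟩

lemma comparable_of_append {s t u v : FinSeq} (h : Comparable (s ++ u) (t ++ v)) :
    Comparable s t := by
  rcases h with h | h
  · exact List.prefix_or_prefix_of_prefix ((List.prefix_append s u).trans h)
      (List.prefix_append t v)
  · exact List.prefix_or_prefix_of_prefix (List.prefix_append s u)
      ((List.prefix_append t v).trans h)

/-- Let `D ∈ 𝒟`, let `(D_n)` be a sequence of elements of `𝒟` and let `{d_n : n ∈ ω}` be a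
one-to-one enumeration of `D`. Then `⋃_{n∈ω} d_n⌢D_n ∈ 𝒟`, where `d_n⌢D_n` is the set of
concatenations of `d_n` with elements of `D_n`. -/
theorem statement12 (D : Set FinSeq) (hD : memD D)
    (Dn : ℕ → Set FinSeq) (hDn : ∀ n, memD (Dn n))
    (d : ℕ → FinSeq) (hinj : Function.Injective d) (hran : Set.range d = D) :
    memD (⋃ n, (fun t => d n ++ t) '' Dn n) := by
  rw [memD_iff] at hD ⊢
  have hinc : ∀ n k, Comparable (d n) (d k) → n = k := by
    intro n k h
    by_contra hne
    exact hD.1 _ (hran ▸ ⟨n, rfl⟩) _ (hran ▸ ⟨k, rfl⟩) (hinj.ne hne) h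
  constructor
  · intro x hx y hy hne hc
    obtain ⟨n, s, hs, rfl⟩ := Set.mem_iUnion.1 hx
    obtain ⟨k, t, ht, rfl⟩ := Set.mem_iUnion.1 hy
    obtain rfl := hinc n k (comparable_of_append hc)
    refine (hDn n).1 s hs t ht (fun h => hne (by rw [h])) ?_
    simpa [Comparable] using hc
  · intro σ
    by_cases hσ : ∃ n, ExtendsF σ (d n)
    · obtain ⟨n, hn⟩ := hσ
      obtain ⟨m, hm⟩ := (memD_iff.1 (hDn n)).2 (fun i => σ ((d n).length + i))
      refine ⟨(d n).length + m, (hm.image (d n ++ ·)).subset ?_⟩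
      rintro x ⟨hx, hp⟩
      obtain ⟨k, t, ht, rfl⟩ := Set.mem_iUnion.1 hx
      rw [seqTake_add, hn] at hp
      obtain rfl := hinc n k (comparable_of_append (Or.inl hp))
      exact ⟨t, ⟨ht, (List.prefix_append_right_inj _).1 hp⟩, rfl⟩
    · push Not at hσ
      obtain ⟨m, hm⟩ := hD.2 σ
      obtain ⟨b, hb⟩ := (hm.image List.length).bddAbove
      -- Past `m` and past the lengths of the finitely many `d n` extending `σ|m`, none is left.
      refine ⟨m + b + 1, Set.finite_empty.subset ?_⟩
      rintro x ⟨hx, hp⟩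
      obtain ⟨k, t, ht, rfl⟩ := Set.mem_iUnion.1 hx
      rcases List.prefix_or_prefix_of_prefix hp (List.prefix_append (d k) t) with h | h
      · have h1 : (d k).length ≤ b :=
          hb ⟨d k, ⟨hran ▸ ⟨k, rfl⟩, (seqTake_prefix σ (by omega)).trans h⟩, rfl⟩
        have h2 := h.length_le
        rw [seqTake_length] at h2
        omega
      · exact absurd (extendsF_of_prefix h) (hσ k)

end
end

section
/- For every α < ω₁ and every B ∈ B̃_α, the rank satisfies r_i(B) = α. -/
/-!
Write `D^γ` for `DiIter`. By transfinite induction, `D^α (clTr B)` is finite and nonempty for every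
`B` in the class `BroomT α` (`diIter_broom`). As the iterated derivatives decrease, `D^(γ+1)` is then
nonempty for `γ < α` and empty for `γ = α`, so the rank is `α`.

For the induction let `T` be the tree generated by `B = ⋃ n, h⌢f n⌢B n`. A node of `T` is either an
initial segment of `h` or of the form `h⌢f n⌢u` with `u ∈ clTr (B n)`. Differentiation acts on each
bristle separately: `h⌢f n⌢u ∈ D^γ T ↔ u ∈ D^γ (clTr (B n))` (`glue_mem_diIter`), because `f` is
injective. The bristles have rank `< α`, so they have vanished in `D^α T`, leaving only
initial segments of `h`. Conversely, for each `γ < α` infinitely many bristles survive in `D^γ T`, so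
every initial segment of `h` survives in `D^α T` (`prefix_mem_diIter`).
-/

open Topology

noncomputable section

universe u

/-- The first uncountable ordinal `ω₁`. -/
def omega1 : Ordinal.{0} := Ordinal.omega 1

/-- The "infinite branching" derivative of a set of finite sequences:
the elements extended by infinitely many elements of the set. -/
def Di (T : Set FinSeq) : Set FinSeq := {t ∈ T | {s ∈ T | t <+: s}.Infinite}

/-- Iterated derivative `D_i^α`. -/
def DiIter (T : Set FinSeq) (α : Ordinal.{0}) : Set FinSeq :=
  Ordinal.limitRecOn α T (fun _ ih => Di ih)
    (fun o _ ih => ⋂ (β : Ordinal) (h : β < o), ih β h)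

open Classical in
/-- The rank `r_i` of a set `S` of finite sequences, computed on the generated tree
`cl_Tr(S)`: it is `⊥` (representing `-1`) if the tree is empty, the least `α < ω₁` with
`D_i^{α+1}(cl_Tr S) = ∅` if such an `α` exists, and `ω₁` otherwise. (For a finite nonempty
tree the least such `α` is `0`, in accordance with the definition of `r_i`.) -/
def rank (S : Set FinSeq) : WithBot Ordinal.{0} :=
  if clTr S = ∅ then ⊥
  else if ∃ α, α < omega1 ∧ DiIter (clTr S) (α + 1) = ∅ then
    ↑(sInf {α | α < omega1 ∧ DiIter (clTr S) (α + 1) = ∅})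
  else ↑omega1

/-- `h⌢k⌢t` : concatenation of a finite sequence `h`, a single term `k` and a finite
sequence `t`. -/
def brGlue (h : FinSeq) (k : ℕ) (t : FinSeq) : FinSeq := h ++ k :: t

/-- The classes `B̃_α`: `B̃_0` consists of the singletons; `B̃_{α+1}` consists of the sets
`⋃_{n∈ω} h⌢f_n⌢B_n` with all bristles `B_n ∈ B̃_α`; for limit `α`, of the sets
`⋃_{n∈ω} h⌢f_n⌢B_n` with `B_n ∈ B̃_{β_n}`, `β_n < α` and `sup_n β_n = α`. -/
def BroomT (α : Ordinal.{0}) : Set (Set FinSeq) :=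
  Ordinal.limitRecOn α
    {B | ∃ s : FinSeq, B = {s}}
    (fun _ prev => {B | ∃ (h : FinSeq) (f : ℕ → ℕ) (Bn : ℕ → Set FinSeq),
        Function.Injective f ∧ (∀ n, Bn n ∈ prev) ∧ B = ⋃ n, brGlue h (f n) '' Bn n})
    (fun o _ prev => {B | ∃ (h : FinSeq) (f : ℕ → ℕ) (Bn : ℕ → Set FinSeq)
        (β : ℕ → Ordinal) (hβ : ∀ n, β n < o),
        Function.Injective f ∧ (∀ n, Bn n ∈ prev (β n) (hβ n)) ∧
        (⨆ n, β n) = o ∧ B = ⋃ n, brGlue h (f n) '' Bn n})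

lemma diIter_zero (T : Set FinSeq) : DiIter T 0 = T := by
  unfold DiIter; rw [Ordinal.limitRecOn_zero]

lemma diIter_succ (T : Set FinSeq) (α : Ordinal.{0}) :
    DiIter T (α + 1) = Di (DiIter T α) := by
  unfold DiIter; rw [Ordinal.limitRecOn_add_one]

lemma diIter_limit (T : Set FinSeq) {α : Ordinal.{0}} (hα : Order.IsSuccLimit α) :
    DiIter T α = ⋂ (β : Ordinal) (_ : β < α), DiIter T β := by
  unfold DiIter; rw [Ordinal.limitRecOn_limit _ _ _ _ hα]

lemma mem_diIter_limit {T : Set FinSeq} {α : Ordinal.{0}} (hα : Order.IsSuccLimit α)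
    {t : FinSeq} : t ∈ DiIter T α ↔ ∀ β < α, t ∈ DiIter T β := by
  rw [diIter_limit T hα]; simp

lemma diIter_anti (T : Set FinSeq) {β γ : Ordinal.{0}} (h : β ≤ γ) :
    DiIter T γ ⊆ DiIter T β := by
  induction γ using Ordinal.limitRecOn with
  | zero => rw [nonpos_iff_eq_zero.1 h]
  | add_one γ ih =>
    rcases h.eq_or_lt with rfl | h
    · exact subset_rfl
    · rw [diIter_succ]
      exact (Set.sep_subset _ _).trans (ih (Order.lt_add_one_iff.1 h))
  | limit γ hγ ih =>
    rcases h.eq_or_lt with rfl | h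
    · exact subset_rfl
    · exact fun t ht => (mem_diIter_limit hγ).1 ht β h

lemma diIter_subset (T : Set FinSeq) (γ : Ordinal.{0}) : DiIter T γ ⊆ T := by
  simpa [diIter_zero] using diIter_anti T zero_le

lemma di_eq_empty_of_finite {T : Set FinSeq} (hT : T.Finite) : Di T = ∅ := by
  ext t
  simpa [Di] using fun _ => hT.subset (Set.sep_subset _ _)

lemma finite_prefixes (s : FinSeq) : {t : FinSeq | t <+: s}.Finite := by
  refine (s.inits.toFinset.finite_toSet).subset fun t ht => ?_
  simpa using ht

lemma glue_injective (h : FinSeq) (k : ℕ) : Function.Injective (brGlue h k) := by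
  intro s t hst
  simpa [brGlue] using hst

/-- The set `⋃ n, h⌢f n⌢B n` with handle `h` and bristles `B n`. -/
def broomSet (h : FinSeq) (f : ℕ → ℕ) (B : ℕ → Set FinSeq) : Set FinSeq :=
  ⋃ n, brGlue h (f n) '' B n

section Broom

variable {h : FinSeq} {f : ℕ → ℕ} {B : ℕ → Set FinSeq}

lemma glue_mem_clTr (hf : Function.Injective f) (n : ℕ) (u : FinSeq) :
    brGlue h (f n) u ∈ clTr (broomSet h f B) ↔ u ∈ clTr (B n) := by
  constructor
  · rintro ⟨s, hs, hus⟩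
    obtain ⟨m, v, hv, rfl⟩ := Set.mem_iUnion.1 hs
    rw [brGlue, brGlue, List.prefix_append_right_inj, List.cons_prefix_cons] at hus
    obtain rfl := hf hus.1
    exact ⟨v, hv, hus.2⟩
  · rintro ⟨v, hv, huv⟩
    refine ⟨brGlue h (f n) v, Set.mem_iUnion.2 ⟨n, v, hv, rfl⟩, ?_⟩
    rw [brGlue, brGlue, List.prefix_append_right_inj, List.cons_prefix_cons]
    exact ⟨rfl, huv⟩

lemma clTr_cases {t : FinSeq} (ht : t ∈ clTr (broomSet h f B)) :
    t <+: h ∨ ∃ n, ∃ u ∈ clTr (B n), t = brGlue h (f n) u := by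
  obtain ⟨s, hs, hts⟩ := ht
  obtain ⟨n, v, hv, rfl⟩ := Set.mem_iUnion.1 hs
  rcases List.prefix_or_prefix_of_prefix hts (List.prefix_append h _) with h1 | ⟨w, rfl⟩
  · exact Or.inl h1
  · rw [brGlue, List.prefix_append_right_inj] at hts
    cases w with
    | nil => left; simp
    | cons k w =>
      obtain ⟨rfl, hw⟩ := List.cons_prefix_cons.1 hts
      exact Or.inr ⟨n, w, ⟨v, hv, hw⟩, rfl⟩

/-- Iterated derivatives of the broom restrict to iterated derivatives of each bristle: the nodes
extending `h⌢f n⌢u` all lie in the `n`-th bristle. -/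
lemma glue_mem_diIter (hf : Function.Injective f) (n : ℕ) (γ : Ordinal.{0}) (u : FinSeq) :
    brGlue h (f n) u ∈ DiIter (clTr (broomSet h f B)) γ ↔ u ∈ DiIter (clTr (B n)) γ := by
  induction γ using Ordinal.limitRecOn generalizing u with
  | zero => rw [diIter_zero, diIter_zero, glue_mem_clTr hf]
  | add_one γ ih =>
    rw [diIter_succ, diIter_succ]
    have key : {s ∈ DiIter (clTr (broomSet h f B)) γ | brGlue h (f n) u <+: s} =
        brGlue h (f n) '' {s ∈ DiIter (clTr (B n)) γ | u <+: s} := by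
      ext s
      constructor
      · rintro ⟨hs, w, rfl⟩
        have e : brGlue h (f n) u ++ w = brGlue h (f n) (u ++ w) := by simp [brGlue]
        rw [e] at hs ⊢
        exact ⟨u ++ w, ⟨(ih _).1 hs, List.prefix_append _ _⟩, rfl⟩
      · rintro ⟨v, ⟨hv, w, rfl⟩, rfl⟩
        exact ⟨(ih _).2 hv, w, by simp [brGlue]⟩
    simp only [Di, Set.mem_ofPred_eq] at key ⊢
    rw [key, ih, Set.infinite_image_iff (glue_injective h (f n)).injOn]
  | limit γ hγ ih =>
    rw [mem_diIter_limit hγ, mem_diIter_limit hγ]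
    exact forall₂_congr fun β hβ => ih β hβ u

/-- If at each stage below `α` infinitely many bristles survive, then so does the handle up to
stage `α`. -/
lemma prefix_mem_diIter (hf : Function.Injective f) (hB : ∃ n, (B n).Nonempty) (α : Ordinal.{0})
    (hinf : ∀ γ < α, {n | (DiIter (clTr (B n)) γ).Nonempty}.Infinite) {p : FinSeq}
    (hp : p <+: h) : p ∈ DiIter (clTr (broomSet h f B)) α := by
  induction α using Ordinal.limitRecOn with
  | zero =>
    rw [diIter_zero]
    obtain ⟨n, v, hv⟩ := hB
    exact ⟨brGlue h (f n) v, Set.mem_iUnion.2 ⟨n, v, hv, rfl⟩,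
      hp.trans (List.prefix_append _ _)⟩
  | add_one γ ih =>
    rw [diIter_succ]
    refine ⟨ih fun δ hδ => hinf δ (hδ.trans (lt_add_one γ)), ?_⟩
    have hI := hinf γ (lt_add_one γ)
    -- choose one surviving node in each surviving bristle
    choose! u hu using fun n (hn : n ∈ {n | (DiIter (clTr (B n)) γ).Nonempty}) => hn
    refine (hI.image (f := fun n => brGlue h (f n) (u n)) ?_).mono ?_
    · intro m _ n _ hmn
      have : f m = f n ∧ u m = u n := by simpa [brGlue] using hmn
      exact hf this.1
    · rintro _ ⟨n, hn, rfl⟩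
      exact ⟨(glue_mem_diIter hf n γ _).2 (hu n hn), hp.trans (List.prefix_append _ _)⟩
  | limit γ hγ ih =>
    exact (mem_diIter_limit hγ).2 fun β hβ => ih β hβ fun δ hδ => hinf δ (hδ.trans hβ)

/-- The inductive step, common to successors and limits: at stage `α` every bristle is gone, so only the
finitely many initial segments of the handle are left, and these do survive. -/
lemma diIter_broomSet (hf : Function.Injective f) {α : Ordinal.{0}} (hα : 0 < α)
    (hinf : ∀ γ < α, {n | (DiIter (clTr (B n)) γ).Nonempty}.Infinite)
    (hemp : ∀ n, DiIter (clTr (B n)) α = ∅) :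
    (DiIter (clTr (broomSet h f B)) α).Finite ∧
      (DiIter (clTr (broomSet h f B)) α).Nonempty := by
  constructor
  · refine (finite_prefixes h).subset fun t ht => ?_
    rcases clTr_cases (diIter_subset _ _ ht) with h1 | ⟨n, u, -, rfl⟩
    · exact h1
    · rw [glue_mem_diIter hf, hemp n] at ht
      exact ht.elim
  · obtain ⟨n, u, hu⟩ := (hinf 0 hα).nonempty
    rw [diIter_zero] at hu
    obtain ⟨s, hs, -⟩ := hu
    exact ⟨h, prefix_mem_diIter hf ⟨n, s, hs⟩ α hinf List.prefix_rfl⟩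

end Broom

lemma diIter_eq_empty_of_finite {T : Set FinSeq} {β γ : Ordinal.{0}} (hfin : (DiIter T β).Finite)
    (h : β < γ) : DiIter T γ = ∅ := by
  have h1 := diIter_anti T (Order.add_one_le_of_lt h)
  rw [diIter_succ, di_eq_empty_of_finite hfin] at h1
  exact Set.subset_empty_iff.1 h1

/-- A sequence of ordinals below its supremum `o` is frequently above any given `γ < o`: otherwise
`γ` and its finitely many larger values would have a common bound below `o`. -/
lemma infinite_le_of_iSup_eq {o : Ordinal.{0}} {β : ℕ → Ordinal.{0}} (hβ : ∀ n, β n < o)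
    (hsup : ⨆ n, β n = o) {γ : Ordinal.{0}} (hγ : γ < o) : {n | γ ≤ β n}.Infinite := by
  intro hfin
  let δ := max γ (hfin.toFinset.sup β)
  have hδ : δ < o :=
    max_lt hγ ((Finset.sup_lt_iff (bot_le.trans_lt hγ)).2 fun n _ => hβ n)
  refine hδ.not_ge (hsup ▸ ciSup_le' fun n => ?_)
  rcases le_total γ (β n) with hn | hn
  · exact (Finset.le_sup (f := β) (hfin.mem_toFinset.2 hn)).trans (le_max_right _ _)
  · exact hn.trans (le_max_left _ _)

/-- The invariant that determines the rank: at stage `α` the derivative of a broom of class `α`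
is finite but not yet empty. -/
theorem diIter_broom (α : Ordinal.{0}) (B : Set FinSeq) (hB : B ∈ BroomT α) :
    (DiIter (clTr B) α).Finite ∧ (DiIter (clTr B) α).Nonempty := by
  induction α using Ordinal.limitRecOn generalizing B with
  | zero =>
    unfold BroomT at hB
    rw [Ordinal.limitRecOn_zero] at hB
    obtain ⟨s, rfl⟩ := hB
    rw [diIter_zero]
    exact ⟨(finite_prefixes s).subset (by rintro t ⟨_, rfl, ht⟩; exact ht),
      s, s, rfl, List.prefix_rfl⟩
  | add_one α ih =>
    unfold BroomT at hB
    rw [Ordinal.limitRecOn_add_one] at hB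
    obtain ⟨h, f, Bn, hf, hBn, rfl⟩ := hB
    refine diIter_broomSet hf (zero_le.trans_lt (lt_add_one α)) (fun γ hγ => ?_) fun n =>
      diIter_eq_empty_of_finite (ih _ (hBn n)).1 (lt_add_one α)
    convert Set.infinite_univ (α := ℕ)
    refine Set.eq_univ_of_forall fun n => ?_
    exact (ih _ (hBn n)).2.mono (diIter_anti _ (Order.lt_add_one_iff.1 hγ))
  | limit α hα ih =>
    unfold BroomT at hB
    rw [Ordinal.limitRecOn_limit _ _ _ _ hα] at hB
    obtain ⟨h, f, Bn, β, hβ, hf, hBn, hsup, rfl⟩ := hB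
    refine diIter_broomSet hf hα.bot_lt (fun γ hγ => ?_) fun n =>
      diIter_eq_empty_of_finite (ih _ (hβ n) _ (hBn n)).1 (hβ n)
    exact (infinite_le_of_iSup_eq hβ hsup hγ).mono fun n hn =>
      (ih _ (hβ n) _ (hBn n)).2.mono (diIter_anti _ hn)

/-- For every `α < ω₁` and every `B ∈ B̃_α`, the rank satisfies `r_i(B) = α`. -/
theorem statement15 (α : Ordinal.{0}) (hα : α < omega1)
    (B : Set FinSeq) (hB : B ∈ BroomT α) :
    rank B = (α : WithBot Ordinal.{0}) := by
  obtain ⟨hfin, hne⟩ := diIter_broom α B hB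
  have hmem : α < omega1 ∧ DiIter (clTr B) (α + 1) = ∅ :=
    ⟨hα, diIter_eq_empty_of_finite hfin (Order.lt_add_one_iff.2 le_rfl)⟩
  unfold rank
  rw [if_neg (hne.mono (diIter_subset _ _)).ne_empty, if_pos ⟨α, hmem⟩]
  congr 1
  refine le_antisymm (csInf_le' hmem) (le_csInf ⟨α, hmem⟩ fun γ hγ => ?_)
  by_contra! hlt
  exact (hne.mono (diIter_anti _ (Order.add_one_le_of_lt hlt))).ne_empty hγ.2

end
end
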